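/- arXiv:1705.09848 — 5 statements merged into one kernel-verified Lean document; each statement's English description precedes it below -/
import Mathlib

section
/- Let X be a real Banach space and E : X → ℝ a continuously differentiable function satisfying the Palais–Smale condition. Let 𝒜 be a nonempty collection of nonempty compact subsets of X, suppose the set { max_{x∈A} E(x) : A ∈ 𝒜 } is bounded below, and set c := inf_{A ∈ 𝒜} max_{x ∈ A} E(x). Assume there exists η > 0 such that for every homeomorphism Ξ : X → X satisfying Ξ(x) = x for all x with E(x) ≤ c − η, one has Ξ(A) ∈ 𝒜 for every A ∈ 𝒜. Then for every ε > 0 there exists δ > 0 such that for every A ∈ 𝒜 with max_{x ∈ A} E(x) < c + δ there exist y ∈ A and x₀ ∈ X with E(x₀) = c, the Fréchet derivative of E at x₀ equal to 0, and ‖y − x₀‖ < ε. -/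
/-!
The proof replaces the usual deformation along a pseudo-gradient flow by Ekeland's variational
principle, so that one short displacement `x ↦ x + t • V x`, with `V` a Lipschitz field, suffices
and no ordinary differential equation has to be solved.

Nonempty compact subsets of `X` form a complete metric space for the Hausdorff distance, on which
`F A = max_A E` is continuous (`continuous_sSup_image`). On the Hausdorff closure of the family `𝒜`
one still has `F ≥ c`, and this closure is still stable under the admissible homeomorphisms.
Given `A ∈ 𝒜` with `F A < c + μ ^ 2`, Ekeland's principle (`ekeland_principle`) with slope `μ`
yields `B` in the closure, at Hausdorff distance at most `μ` from `A`, such that no set in the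
closure at distance `d > 0` from `B` has maximum at most `F B - μ * d`. If `E` had slope greater
than `2 * μ` at every maximum point of `E` on `B`, then a Lipschitz pseudo-gradient field
(`exists_lipschitz_descent_field`) would give an admissible homeomorphism moving points by at most
`t` and lowering the maximum by at least `μ * t` (`exists_descent_homeomorph`), a contradiction.
So `B` has a maximum point with level in `[c, c + μ ^ 2]` and slope at most `2 * μ`, within `μ` of
`A` (`exists_almost_critical_point`). If the theorem failed for some `ε`, letting `μ → 0` and
applying the Palais–Smale condition would produce a critical point at level `c` closer than `ε` to
one of the sets that were assumed to stay away from all such points.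
-/

open Filter Topology Metric TopologicalSpace

/-- **Ekeland's variational principle** for a continuous function on a complete metric space: some
`x` lies below `x₀` for the order `z ≼ x ↔ f z + μ * dist x z ≤ f x` and is minimal for it. -/
theorem ekeland_principle {α : Type*} [MetricSpace α] [CompleteSpace α] (f : α → ℝ)
    (hf : Continuous f) (b : ℝ) (hb : ∀ x, b ≤ f x) (μ : ℝ) (hμ : 0 < μ) (x₀ : α) :
    ∃ x, f x + μ * dist x₀ x ≤ f x₀ ∧ ∀ z, f z + μ * dist x z ≤ f x → z = x := by
  let S : α → Set α := fun x => {z | f z + μ * dist x z ≤ f x}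
  have hself : ∀ x, x ∈ S x := fun x => by simp [S]
  have htrans : ∀ x y z, y ∈ S x → z ∈ S y → z ∈ S x := by
    intro x y z hy hz
    have h := mul_le_mul_of_nonneg_left (dist_triangle x y z) hμ.le
    simp only [S, Set.mem_ofPred_eq] at *
    linarith
  have hclosed : ∀ x, IsClosed (S x) := fun x =>
    isClosed_le (hf.add (continuous_const.mul (continuous_const.dist continuous_id)))
      continuous_const
  -- The next point almost minimises `f` on `S x`, which forces `S` of it to be small.
  have hex : ∀ (n : ℕ) (x : α), ∃ y ∈ S x, ∀ z ∈ S x, f y ≤ f z + 1 / ((n : ℝ) + 1) := by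
    intro n x
    have hbd : BddBelow (f '' S x) := ⟨b, by rintro _ ⟨z, -, rfl⟩; exact hb z⟩
    obtain ⟨_, ⟨y, hy, rfl⟩, hlt⟩ := exists_lt_of_csInf_lt (Set.Nonempty.image f ⟨x, hself x⟩)
      (lt_add_of_pos_right (sInf (f '' S x)) (Nat.one_div_pos_of_nat (α := ℝ) (n := n)))
    refine ⟨y, hy, fun z hz => ?_⟩
    have := csInf_le hbd ⟨z, hz, rfl⟩
    linarith
  choose g hg hgmin using hex
  let u : ℕ → α := fun n => Nat.rec x₀ (fun n x => g n x) n
  have hu : ∀ n, u (n + 1) = g n (u n) := fun n => rfl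
  have hmem : ∀ n k, u (n + k) ∈ S (u n) := by
    intro n k
    induction k with
    | zero => exact hself _
    | succ k ih => exact htrans _ _ _ ih (hu (n + k) ▸ hg _ _)
  have hsmall : ∀ n, ∀ z ∈ S (u (n + 1)), dist (u (n + 1)) z ≤ 1 / ((n : ℝ) + 1) / μ := by
    intro n z hz
    have h1 := hgmin n (u n) z (htrans _ _ _ (hmem n 1) hz)
    rw [← hu] at h1
    simp only [S, Set.mem_ofPred_eq] at hz
    rw [le_div_iff₀ hμ]
    linarith
  have hlim : Tendsto (fun n : ℕ => 1 / ((n : ℝ) + 1) / μ) atTop (𝓝 0) := by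
    simpa using (tendsto_one_div_add_atTop_nhds_zero_nat (𝕜 := ℝ)).div_const μ
  have hcauchy : CauchySeq fun n => u (n + 1) := by
    refine cauchySeq_of_le_tendsto_0' _ (fun n m hnm => hsmall n _ ?_) hlim
    obtain ⟨k, rfl⟩ := Nat.exists_eq_add_of_le hnm
    have := hmem (n + 1) k
    rwa [show n + 1 + k = n + k + 1 by ring] at this
  obtain ⟨x, hx⟩ := cauchySeq_tendsto_of_complete hcauchy
  have hxS : ∀ n, x ∈ S (u n) := by
    intro n
    refine (hclosed _).mem_of_tendsto hx ?_
    filter_upwards [eventually_ge_atTop n] with m hm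
    obtain ⟨k, rfl⟩ := Nat.exists_eq_add_of_le hm
    exact hmem n (k + 1)
  refine ⟨x, hxS 0, fun z hz => ?_⟩
  refine tendsto_nhds_unique ?_ hx
  rw [tendsto_iff_dist_tendsto_zero]
  exact squeeze_zero (fun _ => dist_nonneg)
    (fun n => hsmall n z (htrans _ _ _ (hxS (n + 1)) hz)) hlim

/-- The maximum over a compact set depends continuously on the set: by compactness,
`max_A E > a` says that `A` meets the open set `{E > a}`, and `max_A E < a` that `A` lies in the
open set `{E < a}`. -/
theorem continuous_sSup_image {X : Type*} [TopologicalSpace X] (E : X → ℝ)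
    (hE : Continuous E) :
    Continuous fun A : NonemptyCompacts X => sSup (E '' (A : Set X)) := by
  refine continuous_generateFrom_iff (t := inferInstance) |>.2 ?_ |> fun h => by
    rw [OrderTopology.topology_eq_generate_intervals (α := ℝ)]; exact h
  rintro _ ⟨a, rfl | rfl⟩
  · convert NonemptyCompacts.isOpen_inter_nonempty_of_isOpen (isOpen_lt continuous_const hE :
      IsOpen {x | a < E x}) using 1
    ext A
    simp only [Set.mem_preimage, Set.mem_Ioi, Set.mem_ofPred_eq]
    rw [lt_csSup_iff (A.isCompact.image hE).bddAbove (A.nonempty.image E)]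
    simp [Set.Nonempty]
  · convert NonemptyCompacts.isOpen_subsets_of_isOpen (isOpen_lt hE continuous_const :
      IsOpen {x | E x < a}) using 1
    ext A
    simp only [Set.mem_preimage, Set.mem_Iio, Set.mem_ofPred_eq]
    rw [A.isCompact.sSup_lt_iff_of_continuous A.nonempty hE.continuousOn]
    rfl

/-- A Lipschitz pseudo-gradient field near a compact set `K`, with a cutoff `φ` that is `1` on `K`
and supported in `W`. The cutoff bounds both the length of `V` and, from below, the rate at which
`V` descends; keeping `φ` in the statement makes the fields of two sets easy to glue. -/
theorem exists_lipschitz_descent_field {X : Type*} [NormedAddCommGroup X] [NormedSpace ℝ X]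
    (f' : X → X →L[ℝ] ℝ) (hf' : Continuous f') (W : Set X) (hW : IsOpen W) (κ : ℝ)
    (K : Set X) (hK : IsCompact K) (hKW : K ⊆ W) (hKκ : ∀ x ∈ K, κ < ‖f' x‖) :
    ∃ (φ : X → ℝ) (V : X → X) (L : ℝ), 0 ≤ L ∧ (∀ y, 0 ≤ φ y ∧ φ y ≤ 1) ∧
      (∀ y, ‖V y‖ ≤ φ y) ∧ (∀ y, f' y (V y) ≤ -κ * φ y) ∧ (∀ y ∈ K, φ y = 1) ∧
      (∀ y, y ∉ W → φ y = 0) ∧ (∀ y z, |φ y - φ z| ≤ L * ‖y - z‖) ∧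
      (∀ y z, ‖V y - V z‖ ≤ L * ‖y - z‖) := by
  refine hK.induction_on (p := fun s => ∃ (φ : X → ℝ) (V : X → X) (L : ℝ), 0 ≤ L ∧
      (∀ y, 0 ≤ φ y ∧ φ y ≤ 1) ∧
      (∀ y, ‖V y‖ ≤ φ y) ∧ (∀ y, f' y (V y) ≤ -κ * φ y) ∧ (∀ y ∈ s, φ y = 1) ∧
      (∀ y, y ∉ W → φ y = 0) ∧ (∀ y z, |φ y - φ z| ≤ L * ‖y - z‖) ∧
      (∀ y z, ‖V y - V z‖ ≤ L * ‖y - z‖)) ?_ ?_ ?_ ?_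
  · exact ⟨fun _ => 0, fun _ => 0, 0, by simp⟩
  · rintro s t hst ⟨φ, V, L, h0, h1, h2, h3, h4, h5⟩
    exact ⟨φ, V, L, h0, h1, h2, h3, fun y hy => h4 y (hst hy), h5⟩
  · rintro s t ⟨φ, V, L, hL, hφ, hV, hd, hs, hW', hφL, hVL⟩
      ⟨ψ, U, M, hM, hψ, hU, hd', ht, hW'', hψM, hUM⟩
    refine ⟨fun y => (1 - ψ y) * φ y + ψ y, fun y => (1 - ψ y) • V y + U y, L + 2 * M,
      by positivity, fun y => ?_, fun y => ?_, fun y => ?_, fun y hy => ?_, fun y hy => ?_,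
      fun y z => ?_, fun y z => ?_⟩
    · obtain ⟨a, b⟩ := hφ y
      obtain ⟨a', b'⟩ := hψ y
      constructor <;> nlinarith
    · refine (norm_add_le _ _).trans (add_le_add ?_ (hU y))
      have h1 : 0 ≤ 1 - ψ y := by linarith [(hψ y).2]
      rw [norm_smul, Real.norm_of_nonneg h1]
      exact mul_le_mul_of_nonneg_left (hV y) h1
    · have h1 : 0 ≤ 1 - ψ y := by linarith [(hψ y).2]
      have h2 := mul_le_mul_of_nonneg_left (hd y) h1
      have h3 := hd' y
      simp only [map_add, map_smul, smul_eq_mul]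
      linarith
    · rcases hy with hy | hy
      · simp [hs y hy]
      · simp [ht y hy]
    · simp [hW' y hy, hW'' y hy]
    · have e : (1 - ψ y) * φ y + ψ y - ((1 - ψ z) * φ z + ψ z)
          = (1 - ψ y) * (φ y - φ z) + ((1 - φ z) * (ψ y - ψ z)) := by ring
      rw [e]
      refine (abs_add_le _ _).trans ?_
      rw [abs_mul, abs_mul, abs_of_nonneg (show 0 ≤ 1 - ψ y by linarith [(hψ y).2]),
        abs_of_nonneg (show 0 ≤ 1 - φ z by linarith [(hφ z).2])]
      have h1 : (1 - ψ y) * |φ y - φ z| ≤ 1 * (L * ‖y - z‖) :=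
        mul_le_mul (by linarith [(hψ y).1]) (hφL y z) (abs_nonneg _) zero_le_one
      have h2 : (1 - φ z) * |ψ y - ψ z| ≤ 1 * (M * ‖y - z‖) :=
        mul_le_mul (by linarith [(hφ z).1]) (hψM y z) (abs_nonneg _) zero_le_one
      have h3 : 0 ≤ M * ‖y - z‖ := by positivity
      linarith
    · have e : (1 - ψ y) • V y + U y - ((1 - ψ z) • V z + U z)
          = (1 - ψ y) • (V y - V z) + (-(ψ y - ψ z)) • V z + (U y - U z) := by module
      rw [e]
      refine (norm_add₃_le).trans ?_
      rw [norm_smul, norm_smul, Real.norm_of_nonneg (show 0 ≤ 1 - ψ y by linarith [(hψ y).2]),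
        norm_neg, Real.norm_eq_abs]
      have h1 : (1 - ψ y) * ‖V y - V z‖ ≤ 1 * (L * ‖y - z‖) :=
        mul_le_mul (by linarith [(hψ y).1]) (hVL y z) (norm_nonneg _) zero_le_one
      have h2 : |ψ y - ψ z| * ‖V z‖ ≤ (M * ‖y - z‖) * 1 :=
        mul_le_mul (hψM y z) ((hV z).trans (hφ z).2) (norm_nonneg _) (by positivity)
      linarith [hUM y z]
  · intro x hx
    obtain ⟨v, hv1, hv⟩ : ∃ v : X, ‖v‖ ≤ 1 ∧ f' x v < -κ := by
      obtain ⟨v, hv1, hv⟩ := (f' x).exists_lt_apply_of_lt_opNorm (hKκ x hx)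
      rw [Real.norm_eq_abs, lt_abs] at hv
      rcases hv with hv | hv
      · exact ⟨-v, by rw [norm_neg]; exact hv1.le, by rw [map_neg]; linarith⟩
      · exact ⟨v, hv1.le, by linarith⟩
    have hopen : IsOpen (W ∩ {y | f' y v < -κ}) :=
      hW.inter (isOpen_lt (hf'.clm_apply continuous_const) continuous_const)
    obtain ⟨ρ, hρ, hball⟩ := Metric.isOpen_iff.1 hopen x ⟨hKW hx, hv⟩
    -- The cutoff is `1` on `ball x (ρ / 2)` and `0` off `ball x ρ`.
    have hφL : ∀ y z, |max 0 (min 1 (2 - 2 * ‖y - x‖ / ρ)) - max 0 (min 1 (2 - 2 * ‖z - x‖ / ρ))|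
        ≤ 2 / ρ * ‖y - z‖ := by
      intro y z
      calc |max 0 (min 1 (2 - 2 * ‖y - x‖ / ρ)) - max 0 (min 1 (2 - 2 * ‖z - x‖ / ρ))|
          ≤ |min 1 (2 - 2 * ‖y - x‖ / ρ) - min 1 (2 - 2 * ‖z - x‖ / ρ)| := by
            simpa using abs_max_sub_max_le_max 0 (min 1 (2 - 2 * ‖y - x‖ / ρ)) 0
              (min 1 (2 - 2 * ‖z - x‖ / ρ))
        _ ≤ |(2 - 2 * ‖y - x‖ / ρ) - (2 - 2 * ‖z - x‖ / ρ)| := by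
            simpa using abs_min_sub_min_le_max 1 (2 - 2 * ‖y - x‖ / ρ) 1 (2 - 2 * ‖z - x‖ / ρ)
        _ = 2 / ρ * |‖y - x‖ - ‖z - x‖| := by
            rw [show (2 - 2 * ‖y - x‖ / ρ) - (2 - 2 * ‖z - x‖ / ρ)
              = -(2 / ρ * (‖y - x‖ - ‖z - x‖)) by ring, abs_neg, abs_mul,
              abs_of_pos (show 0 < 2 / ρ by positivity)]
        _ ≤ 2 / ρ * ‖y - z‖ := by
            refine mul_le_mul_of_nonneg_left ?_ (by positivity)
            simpa using abs_norm_sub_norm_le (y - x) (z - x)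
    have hzero : ∀ y, y ∉ ball x ρ → max 0 (min 1 (2 - 2 * ‖y - x‖ / ρ)) = 0 := by
      intro y hy
      rw [mem_ball, dist_eq_norm, not_lt] at hy
      refine max_eq_left ((min_le_right _ _).trans ?_)
      have : 2 ≤ 2 * ‖y - x‖ / ρ := by rw [le_div_iff₀ hρ]; linarith
      linarith
    refine ⟨ball x (ρ / 2), mem_nhdsWithin_of_mem_nhds (ball_mem_nhds _ (half_pos hρ)),
      fun y => max 0 (min 1 (2 - 2 * ‖y - x‖ / ρ)),
      fun y => max 0 (min 1 (2 - 2 * ‖y - x‖ / ρ)) • v, 2 / ρ, by positivity,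
      fun y => ⟨le_max_left _ _, max_le zero_le_one (min_le_left _ _)⟩, fun y => ?_, fun y => ?_,
      fun y hy => ?_, fun y hy => hzero y fun h => hy (hball h).1, hφL, fun y z => ?_⟩
    · rw [norm_smul, Real.norm_of_nonneg (le_max_left _ _)]
      exact mul_le_of_le_one_right (le_max_left _ _) hv1
    · by_cases hy : y ∈ ball x ρ
      · have h1 : f' y v < -κ := (hball hy).2
        rw [map_smul, smul_eq_mul, mul_comm]
        exact mul_le_mul_of_nonneg_right h1.le (le_max_left _ _)
      · simp only [hzero y hy]; simp
    · rw [mem_ball, dist_eq_norm] at hy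
      have : 2 * ‖y - x‖ / ρ ≤ 1 := by rw [div_le_one hρ]; linarith
      have h1 : min 1 (2 - 2 * ‖y - x‖ / ρ) = 1 := min_eq_left (by linarith)
      simp only [h1]; simp
    · rw [← sub_smul, norm_smul, Real.norm_eq_abs]
      exact (mul_le_of_le_one_right (abs_nonneg _) hv1).trans (hφL y z)

/-- A perturbation of the identity by a contraction is a homeomorphism of a Banach space. -/
theorem exists_homeomorph_id_add {X : Type*} [NormedAddCommGroup X] [NormedSpace ℝ X]
    [CompleteSpace X] (G : X → X) (hG : ∀ y z, ‖G y - G z‖ ≤ 1 / 2 * ‖y - z‖) :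
    ∃ Ξ : X ≃ₜ X, ∀ x, Ξ x = x + G x := by
  have happ : ApproximatesLinearOn (fun x => x + G x)
      ((ContinuousLinearEquiv.refl ℝ X : X ≃L[ℝ] X) : X →L[ℝ] X) Set.univ (1 / 2) := by
    intro y _ z _
    have e : y + G y - (z + G z) - (y - z) = G y - G z := by abel
    simpa [e] using hG y z
  refine ⟨happ.toHomeomorph _ ?_, fun x => rfl⟩
  rcases subsingleton_or_nontrivial X with h | h
  · exact Or.inl h
  · right
    have : ‖((ContinuousLinearEquiv.refl ℝ X).symm : X →L[ℝ] X)‖₊ = 1 :=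
      ContinuousLinearMap.nnnorm_id
    rw [this, inv_one]
    exact NNReal.half_lt_self one_ne_zero

/-- If `E ≤ M` on a compact set `A` and `E` has slope greater than `κ > μ` at all points of `A` at
level `M`, then some homeomorphism moves points by at most `t`, fixes `{E ≤ a}` and brings `A`
below the level `M - μ * t`. -/
theorem exists_descent_homeomorph {X : Type*} [NormedAddCommGroup X] [NormedSpace ℝ X]
    [CompleteSpace X] (E : X → ℝ) (hE : ContDiff ℝ 1 E) (A : Set X) (hA : IsCompact A)
    (M a μ κ : ℝ) (haM : a < M) (hμκ : μ < κ) (hM : ∀ x ∈ A, E x ≤ M)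
    (hκ : ∀ x ∈ A, E x = M → κ < ‖fderiv ℝ E x‖) :
    ∃ (Ξ : X ≃ₜ X) (t : ℝ), 0 < t ∧ (∀ x, E x ≤ a → Ξ x = x) ∧ (∀ x, ‖Ξ x - x‖ ≤ t) ∧
      ∀ x ∈ A, E (Ξ x) ≤ M - μ * t := by
  have hEc := hE.continuous
  obtain ⟨φ, V, L, hL, hφ, hV, hd, hφK, hφW, -, hVL⟩ := exists_lipschitz_descent_field (fderiv ℝ E)
    (hE.continuous_fderiv one_ne_zero) {x | a < E x} (isOpen_lt continuous_const hEc) κ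
    (A ∩ {x | E x = M}) (hA.inter_right (isClosed_eq hEc continuous_const))
    (fun x hx => by rw [Set.mem_ofPred_eq, hx.2]; exact haM) (fun x hx => hκ x hx.1 hx.2)
  have hVc : Continuous V := by
    refine (LipschitzWith.of_dist_le_mul (K := ⟨L, hL⟩) fun y z => ?_).continuous
    rw [dist_eq_norm, dist_eq_norm]
    exact hVL y z
  have hV1 : ∀ y, ‖V y‖ ≤ 1 := fun y => (hV y).trans (hφ y).2
  have key : ∀ᶠ t : ℝ in 𝓝 0, ∀ x ∈ A, 0 < t → E (x + t • V x) ≤ M - μ * t := by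
    suffices h : ∀ᶠ t : ℝ in 𝓝 0, ∀ x ∈ A, x ∈ A → 0 < t → E (x + t • V x) ≤ M - μ * t from
      h.mono fun t ht x hx => ht x hx hx
    refine hA.eventually_forall_of_forall_eventually
      (P := fun t x => x ∈ A → 0 < t → E (x + t • V x) ≤ M - μ * t) fun x hx => ?_
    have hc2 : Continuous fun p : ℝ × X => p.2 + p.1 • V p.2 := by fun_prop
    rcases (hM x hx).lt_or_eq with hlt | heq
    · have h1 : Continuous fun p : ℝ × X => E (p.2 + p.1 • V p.2) + μ * p.1 := by fun_prop
      have h2 : ∀ᶠ p : ℝ × X in 𝓝 (0, x), E (p.2 + p.1 • V p.2) + μ * p.1 < M :=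
        h1.continuousAt.eventually_lt continuousAt_const (by simpa using hlt)
      filter_upwards [h2] with p hp _ _
      linarith
    · -- Strict differentiability at `x` makes the first-order expansion uniform near `x`.
      have hx' : fderiv ℝ E x (V x) ≤ -κ := by simpa [hφK x ⟨hx, heq⟩] using hd x
      have hε : 0 < (κ - μ) / 2 := by linarith
      have hlin := (hE.hasStrictFDerivAt (x := x) one_ne_zero).isLittleO.def hε
      have htend : Tendsto (fun p : ℝ × X => (p.2 + p.1 • V p.2, p.2)) (𝓝 (0, x)) (𝓝 (x, x)) := by
        have : Continuous fun p : ℝ × X => (p.2 + p.1 • V p.2, p.2) := by fun_prop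
        simpa using this.tendsto (0, x)
      have h1 : Continuous fun p : ℝ × X => fderiv ℝ E x (V p.2) := by fun_prop
      have h2 : ∀ᶠ p : ℝ × X in 𝓝 (0, x), fderiv ℝ E x (V p.2) < -(κ + μ) / 2 :=
        h1.continuousAt.eventually_lt continuousAt_const (by simp only; linarith)
      filter_upwards [htend.eventually hlin, h2] with p hp hp2 hpA hpos
      simp only [add_sub_cancel_left, map_smul, smul_eq_mul, norm_smul,
        Real.norm_of_nonneg hpos.le] at hp
      have h3 := (le_abs_self _).trans hp
      have h4 := mul_le_mul_of_nonneg_left (hV1 p.2) hpos.le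
      have h5 := mul_le_mul_of_nonneg_left h4 hε.le
      have h6 := mul_le_mul_of_nonneg_left hp2.le hpos.le
      linarith [hM p.2 hpA]
  have hLt : ∀ᶠ t : ℝ in 𝓝 0, t * L < 1 / 2 :=
    (by fun_prop : Continuous fun t : ℝ => t * L).continuousAt.eventually_lt continuousAt_const
      (by norm_num)
  have hpos : ∀ᶠ t : ℝ in 𝓝[>] 0, 0 < t := eventually_mem_nhdsWithin
  obtain ⟨t, ⟨hkey, hLt⟩, ht⟩ :=
    (((key.and hLt).filter_mono nhdsWithin_le_nhds).and hpos).exists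
  obtain ⟨Ξ, hΞ⟩ := exists_homeomorph_id_add (fun x => t • V x) fun y z => by
    rw [← smul_sub, norm_smul, Real.norm_of_nonneg ht.le]
    calc t * ‖V y - V z‖ ≤ t * (L * ‖y - z‖) := mul_le_mul_of_nonneg_left (hVL y z) ht.le
      _ = t * L * ‖y - z‖ := by ring
      _ ≤ 1 / 2 * ‖y - z‖ := mul_le_mul_of_nonneg_right hLt.le (norm_nonneg _)
  refine ⟨Ξ, t, ht, fun x hx => ?_, fun x => ?_, fun x hx => ?_⟩
  · have h0 : ‖V x‖ ≤ 0 := (hV x).trans (hφW x (not_lt.2 hx)).le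
    rw [hΞ, norm_le_zero_iff.1 h0, smul_zero, add_zero]
  · rw [hΞ, add_sub_cancel_left, norm_smul, Real.norm_of_nonneg ht.le]
    exact mul_le_of_le_one_right ht.le (hV1 x)
  · rw [hΞ]; exact hkey x hx ht

/-- Near a member `A` of the family there is an almost critical point of `E`, found by applying
Ekeland's principle to the maximum of `E` on the Hausdorff closure of the family. The parameter `μ`
trades the slope at this point against its distance to `A`. -/
theorem exists_almost_critical_point {X : Type*} [NormedAddCommGroup X] [NormedSpace ℝ X]
    [CompleteSpace X] (E : X → ℝ) (hE : ContDiff ℝ 1 E) (𝒜 : Set (Set X))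
    (h𝒜 : ∀ A ∈ 𝒜, A.Nonempty ∧ IsCompact A) (c η : ℝ) (hη : 0 < η)
    (hc : ∀ A ∈ 𝒜, c ≤ sSup (E '' A))
    (hinv : ∀ Ξ : X ≃ₜ X, (∀ x : X, E x ≤ c - η → Ξ x = x) → ∀ A ∈ 𝒜, Ξ '' A ∈ 𝒜)
    (A : Set X) (hA : A ∈ 𝒜) (μ : ℝ) (hμ : 0 < μ) :
    ∃ x, c ≤ E x ∧ E x ≤ sSup (E '' A) ∧ ‖fderiv ℝ E x‖ ≤ 2 * μ ∧
      ∃ y ∈ A, μ * dist x y ≤ sSup (E '' A) - c := by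
  let F : NonemptyCompacts X → ℝ := fun B => sSup (E '' (B : Set X))
  have hF : Continuous F := continuous_sSup_image E hE.continuous
  let 𝒞 : Set (NonemptyCompacts X) := {B | (B : Set X) ∈ 𝒜}
  have hcF : ∀ B ∈ closure 𝒞, c ≤ F B := fun B hB =>
    closure_minimal (s := 𝒞) (t := {B | c ≤ F B}) (fun B hB => hc _ hB)
      (isClosed_le continuous_const hF) hB
  have hinv' : ∀ Ξ : X ≃ₜ X, (∀ x : X, E x ≤ c - η → Ξ x = x) →
      ∀ B ∈ closure 𝒞, B.map Ξ Ξ.continuous ∈ closure 𝒞 := fun Ξ hΞ B hB =>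
    map_mem_closure Ξ.continuous.nonemptyCompacts_map hB fun B hB => hinv Ξ hΞ _ hB
  let A₀ : NonemptyCompacts X := ⟨⟨A, (h𝒜 A hA).2⟩, (h𝒜 A hA).1⟩
  have hA₀ : A₀ ∈ closure 𝒞 := subset_closure hA
  have : CompleteSpace (closure 𝒞) := isClosed_closure.completeSpace_coe
  obtain ⟨⟨B, hB⟩, hB1, hB2⟩ := ekeland_principle (fun B : closure 𝒞 => F B)
    (hF.comp continuous_subtype_val) c (fun B => hcF B B.2) μ hμ ⟨A₀, hA₀⟩
  change F B + μ * dist A₀ B ≤ sSup (E '' A) at hB1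
  have hBbdd : BddAbove (E '' (B : Set X)) := (B.isCompact.image hE.continuous).bddAbove
  have hdist := mul_nonneg hμ.le (dist_nonneg (x := A₀) (y := B))
  obtain ⟨x, hxB, hxM, hx⟩ : ∃ x ∈ B, E x = F B ∧ ‖fderiv ℝ E x‖ ≤ 2 * μ := by
    by_contra! hcon
    obtain ⟨Ξ, t, ht, hfix, hmove, hdesc⟩ := exists_descent_homeomorph E hE B B.isCompact (F B)
      (c - η) μ (2 * μ) (by linarith [hcF B hB]) (by linarith)
      (fun x hx => le_csSup hBbdd ⟨x, hx, rfl⟩) hcon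
    have hdB : dist B (B.map Ξ Ξ.continuous) ≤ t := by
      rw [NonemptyCompacts.dist_eq, NonemptyCompacts.coe_map]
      refine hausdorffDist_le_of_mem_dist ht.le (fun x hx => ⟨Ξ x, ⟨x, hx, rfl⟩, ?_⟩) ?_
      · rw [dist_comm, dist_eq_norm]; exact hmove x
      · rintro _ ⟨x, hx, rfl⟩
        exact ⟨x, hx, by rw [dist_eq_norm]; exact hmove x⟩
    have hFB : F (B.map Ξ Ξ.continuous) ≤ F B - μ * t := by
      refine csSup_le ((B.map Ξ Ξ.continuous).nonempty.image E) ?_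
      rintro _ ⟨_, ⟨x, hx, rfl⟩, rfl⟩
      exact hdesc x hx
    have h1 := hB2 ⟨B.map Ξ Ξ.continuous, hinv' Ξ hfix B hB⟩ (by
      change F _ + μ * dist B (B.map Ξ Ξ.continuous) ≤ F B
      have := mul_le_mul_of_nonneg_left hdB hμ.le
      linarith)
    rw [Subtype.mk.injEq] at h1
    rw [h1] at hFB
    have := mul_pos hμ ht
    linarith
  refine ⟨x, hxM ▸ hcF B hB, by linarith, hx, ?_⟩
  obtain ⟨y, hy, hxy⟩ := (h𝒜 A hA).2.exists_infDist_eq_dist (h𝒜 A hA).1 x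
  refine ⟨y, hy, ?_⟩
  have h1 : dist x y ≤ dist A₀ B := by
    rw [dist_comm A₀, ← hxy, NonemptyCompacts.dist_eq]
    exact infDist_le_hausdorffDist_of_mem hxB (edist_ne_top B A₀)
  have := mul_le_mul_of_nonneg_left h1 hμ.le
  linarith [hcF B hB]


/-- Min-max principle (Proposition A.1): for a `C¹` functional `E` on a Banach space
satisfying the Palais–Smale condition, and an admissible family `𝒜` of nonempty compact
sets invariant under homeomorphisms fixing the sublevel set `{E ≤ c - η}`, any set in the
family whose max is `< c + δ` contains a point `ε`-close to a critical point at level `c`. -/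
theorem minmax_critical_point_near_admissible_family
    {X : Type*} [NormedAddCommGroup X] [NormedSpace ℝ X] [CompleteSpace X]
    (E : X → ℝ) (hE : ContDiff ℝ 1 E)
    (hPS : ∀ x : ℕ → X,
      Filter.atTop.limsup (fun i => (E (x i) : EReal)) < ⊤ →
      Filter.Tendsto (fun i => ‖fderiv ℝ E (x i)‖) Filter.atTop (nhds 0) →
      ∃ φ : ℕ → ℕ, StrictMono φ ∧ ∃ xlim : X,
        Filter.Tendsto (fun i => x (φ i)) Filter.atTop (nhds xlim) ∧ fderiv ℝ E xlim = 0)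
    (𝒜 : Set (Set X)) (h𝒜ne : 𝒜.Nonempty)
    (h𝒜 : ∀ A ∈ 𝒜, A.Nonempty ∧ IsCompact A)
    (hbdd : BddBelow {r : ℝ | ∃ A ∈ 𝒜, sSup (E '' A) = r})
    (c : ℝ) (hc : c = sInf {r : ℝ | ∃ A ∈ 𝒜, sSup (E '' A) = r})
    (hinv : ∃ η > (0:ℝ), ∀ Ξ : X ≃ₜ X,
      (∀ x : X, E x ≤ c - η → Ξ x = x) → ∀ A ∈ 𝒜, Ξ '' A ∈ 𝒜) :
    ∀ ε > (0:ℝ), ∃ δ > (0:ℝ), ∀ A ∈ 𝒜, sSup (E '' A) < c + δ →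
      ∃ y ∈ A, ∃ x₀ : X, E x₀ = c ∧ fderiv ℝ E x₀ = 0 ∧ ‖y - x₀‖ < ε := by
  obtain ⟨η, hη, hinv⟩ := hinv
  have hcle : ∀ A ∈ 𝒜, c ≤ sSup (E '' A) := fun A hA => hc ▸ csInf_le hbdd ⟨A, hA, rfl⟩
  intro ε hε
  by_contra! hcon
  -- The slope `r n` together with the excess `r n ^ 2` gives points at distance at most `r n`.
  let r : ℕ → ℝ := fun n => 1 / ((n : ℝ) + 1)
  have hr : ∀ n, 0 < r n := fun n => Nat.one_div_pos_of_nat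
  have hrlim : Tendsto r atTop (𝓝 0) := tendsto_one_div_add_atTop_nhds_zero_nat
  choose A hA hAlt hfar using fun n => hcon (r n ^ 2) (pow_pos (hr n) 2)
  choose x hxc hxA hxd y hy hxy using fun n =>
    exists_almost_critical_point E hE 𝒜 h𝒜 c η hη hcle hinv (A n) (hA n) (r n) (hr n)
  have hdist : ∀ n, dist (x n) (y n) ≤ r n := by
    intro n
    refine le_of_mul_le_mul_left ?_ (hr n)
    nlinarith [hxy n, hAlt n]
  have hElim : Tendsto (fun n => E (x n)) atTop (𝓝 c) := by
    refine tendsto_of_tendsto_of_tendsto_of_le_of_le tendsto_const_nhds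
      (h := fun n => c + r n ^ 2) ?_ hxc fun n => (hxA n).trans (hAlt n).le
    simpa using (hrlim.pow 2).const_add c
  have hdlim : Tendsto (fun n => ‖fderiv ℝ E (x n)‖) atTop (𝓝 0) :=
    squeeze_zero (fun _ => norm_nonneg _) hxd (by simpa using hrlim.const_mul 2)
  have hlimsup : limsup (fun n => (E (x n) : EReal)) atTop < ⊤ := by
    have h : Tendsto (fun n => (E (x n) : EReal)) atTop (𝓝 c) :=
      (continuous_coe_real_ereal.tendsto c).comp hElim
    rw [h.limsup_eq]
    exact EReal.coe_lt_top c
  obtain ⟨φ, hφ, x₀, hx₀, hcrit⟩ := hPS x hlimsup hdlim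
  have hEx₀ : E x₀ = c := tendsto_nhds_unique ((hE.continuous.tendsto x₀).comp hx₀)
    (hElim.comp hφ.tendsto_atTop)
  have hyx : Tendsto (fun n => ‖y (φ n) - x₀‖) atTop (𝓝 0) := by
    refine squeeze_zero (fun _ => norm_nonneg _)
      (g := fun n => r (φ n) + dist (x (φ n)) x₀) (fun n => ?_) ?_
    · rw [← dist_eq_norm]
      refine (dist_triangle_left _ _ (x (φ n))).trans ?_
      exact add_le_add_left (hdist _) _
    · simpa using (hrlim.comp hφ.tendsto_atTop).add (tendsto_iff_dist_tendsto_zero.1 hx₀)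
  obtain ⟨n, hn⟩ := (hyx.eventually_lt_const hε).exists
  exact absurd (hfar (φ n) _ (hy _) x₀ hEx₀ hcrit) (not_le.2 hn)
end

section
/- Let X be a real Banach space and E : X → ℝ a continuously differentiable function satisfying the Palais–Smale condition, and let W ∈ ℝ. Then for every ε > 0 there exists δ > 0 such that every x ∈ X with |E(x) − W| ≤ δ and ‖fderiv ℝ E x‖ ≤ δ^{1/4} admits a point x₀ ∈ X with E(x₀) = W, fderiv ℝ E x₀ = 0, and ‖x − x₀‖ ≤ ε. -/
/-!
The proof is by contradiction and compactness. If the claim fails for some `ε`, applying its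
negation with `δ = 1 / (n + 1)` gives points `x n` with `E (x n) → W` and `‖fderiv ℝ E (x n)‖ → 0`.
The Palais–Smale condition extracts a subsequence converging to a critical point, which lies at
level `W` because `E` is continuous, and is eventually within `ε` of the subsequence: a
contradiction.
-/


/-- Claim (A.I.3) in the proof of Proposition A.1: for a `C¹` Palais–Smale functional `E`,
almost-critical points at almost the level `W` lie at distance at most `ε` from an exact
critical point at level exactly `W`. -/
theorem almost_critical_near_exact_critical
    {X : Type*} [NormedAddCommGroup X] [NormedSpace ℝ X] [CompleteSpace X]
    (E : X → ℝ) (hE : ContDiff ℝ 1 E)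
    (hPS : ∀ x : ℕ → X,
      Filter.atTop.limsup (fun i => (E (x i) : EReal)) < ⊤ →
      Filter.Tendsto (fun i => ‖fderiv ℝ E (x i)‖) Filter.atTop (nhds 0) →
      ∃ φ : ℕ → ℕ, StrictMono φ ∧ ∃ xlim : X,
        Filter.Tendsto (fun i => x (φ i)) Filter.atTop (nhds xlim) ∧ fderiv ℝ E xlim = 0)
    (W : ℝ) :
    ∀ ε > (0:ℝ), ∃ δ > (0:ℝ), ∀ x : X,
      |E x - W| ≤ δ → ‖fderiv ℝ E x‖ ≤ δ ^ ((1:ℝ)/4) →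
      ∃ x₀ : X, E x₀ = W ∧ fderiv ℝ E x₀ = 0 ∧ ‖x - x₀‖ ≤ ε := by
  intro ε hε
  by_contra! hcon
  have hpos : ∀ n : ℕ, (0:ℝ) < 1 / ((n:ℝ) + 1) := fun n => Nat.one_div_pos_of_nat
  choose x hxE hxD hx using fun n : ℕ => hcon _ (hpos n)
  have hδ : Filter.Tendsto (fun n : ℕ => 1 / ((n:ℝ) + 1)) Filter.atTop (nhds 0) :=
    tendsto_one_div_add_atTop_nhds_zero_nat
  have hElim : Filter.Tendsto (fun n => E (x n)) Filter.atTop (nhds W) := by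
    rw [tendsto_iff_norm_sub_tendsto_zero]
    exact squeeze_zero (fun _ => norm_nonneg _) hxE hδ
  have hDlim : Filter.Tendsto (fun n => ‖fderiv ℝ E (x n)‖) Filter.atTop (nhds 0) := by
    refine squeeze_zero (fun _ => norm_nonneg _) hxD ?_
    simpa using hδ.rpow_const (p := (1:ℝ) / 4) (Or.inr (by norm_num))
  have hsup : Filter.atTop.limsup (fun i => (E (x i) : EReal)) < ⊤ := by
    have hEReal : Filter.Tendsto (fun n => (E (x n) : EReal)) Filter.atTop (nhds (W : EReal)) :=
      (continuous_coe_real_ereal.tendsto W).comp hElim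
    rw [hEReal.limsup_eq]
    exact EReal.coe_lt_top W
  obtain ⟨φ, hφ, a, ha, hcrit⟩ := hPS x hsup hDlim
  have hEa : E a = W :=
    tendsto_nhds_unique ((hE.continuous.tendsto a).comp ha) (hElim.comp hφ.tendsto_atTop)
  obtain ⟨n, hn⟩ := (ha.eventually (Metric.ball_mem_nhds a hε)).exists
  rw [dist_eq_norm] at hn
  exact (hx (φ n) a hEa hcrit).not_ge hn.le
end

section
/- Let X be a real normed vector space, let t₁ ≤ t₂ be real numbers, and let γ : ℝ → X and f : ℝ → ℝ be continuously differentiable on the interval [t₁, t₂] (differentiable at every point of [t₁, t₂] with derivatives continuous on [t₁, t₂]). If ‖γ'(t)‖² ≤ −4 f'(t) for every t ∈ [t₁, t₂], then ‖γ(t₂) − γ(t₁)‖ ≤ 2 · √(t₂ − t₁) · √(f(t₁) − f(t₂)). -/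
/-!
The estimate is Cauchy–Schwarz for `∫ ‖γ'‖`, obtained here without integration. For every real `c`,
`|c| ‖γ'‖ ≤ c² + ‖γ'‖² / 4 ≤ c² - f'`, so the mean value inequality applied to `c • γ` gives
`|c| ‖γ t₂ - γ t₁‖ ≤ c² (t₂ - t₁) + (f t₁ - f t₂)`. Thus the quadratic polynomial
`(t₂ - t₁) c² - ‖γ t₂ - γ t₁‖ c + (f t₁ - f t₂)` is nonnegative for all `c`, and its discriminant
is nonpositive: `‖γ t₂ - γ t₁‖² ≤ 4 (t₂ - t₁) (f t₁ - f t₂)`.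
-/

/-- Distance–energy estimate (A.I.1): if `‖γ'(t)‖² ≤ -4 f'(t)` on `[t₁, t₂]`, then the
displacement of `γ` is controlled by the elapsed time and the drop of `f`. -/
theorem displacement_le_sqrt_time_mul_sqrt_energy_drop
    {X : Type*} [NormedAddCommGroup X] [NormedSpace ℝ X]
    (t₁ t₂ : ℝ) (h12 : t₁ ≤ t₂)
    (γ : ℝ → X) (f : ℝ → ℝ) (γ' : ℝ → X) (f' : ℝ → ℝ)
    (hγ : ∀ t ∈ Set.Icc t₁ t₂, HasDerivAt γ (γ' t) t)
    (hf : ∀ t ∈ Set.Icc t₁ t₂, HasDerivAt f (f' t) t)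
    (hγ'c : ContinuousOn γ' (Set.Icc t₁ t₂))
    (hf'c : ContinuousOn f' (Set.Icc t₁ t₂))
    (hineq : ∀ t ∈ Set.Icc t₁ t₂, ‖γ' t‖ ^ 2 ≤ -4 * f' t) :
    ‖γ t₂ - γ t₁‖ ≤ 2 * Real.sqrt (t₂ - t₁) * Real.sqrt (f t₁ - f t₂) := by
  have key : ∀ c : ℝ, |c| * ‖γ t₂ - γ t₁‖ ≤ c ^ 2 * (t₂ - t₁) + (f t₁ - f t₂) := by
    intro c
    have hder : ∀ t ∈ Set.Icc t₁ t₂, HasDerivAt (fun s => c • (γ s - γ t₁)) (c • γ' t) t :=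
      fun t ht => ((hγ t ht).sub_const (γ t₁)).const_smul c
    have hB : ∀ t ∈ Set.Icc t₁ t₂,
        HasDerivAt (fun s => c ^ 2 * (s - t₁) + (f t₁ - f s)) (c ^ 2 * 1 + -f' t) t :=
      fun t ht => (((hasDerivAt_id t).sub_const t₁).const_mul (c ^ 2)).add
        ((hf t ht).const_sub (f t₁))
    have h := image_norm_le_of_norm_deriv_right_le_deriv_boundary'
      (fun t ht => (hder t ht).continuousAt.continuousWithinAt)
      (fun t ht => (hder t (Set.Ico_subset_Icc_self ht)).hasDerivWithinAt)
      (by simp)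
      (fun t ht => (hB t ht).continuousAt.continuousWithinAt)
      (fun t ht => (hB t (Set.Ico_subset_Icc_self ht)).hasDerivWithinAt)
      (fun t ht => by
        have h1 := hineq t (Set.Ico_subset_Icc_self ht)
        rw [norm_smul, Real.norm_eq_abs]
        nlinarith [sq_nonneg (|c| - ‖γ' t‖ / 2), sq_abs c])
      (Set.right_mem_Icc.2 h12)
    simpa only [norm_smul, Real.norm_eq_abs] using h
  have hF : 0 ≤ f t₁ - f t₂ := by simpa using key 0
  have hdisc : discrim (t₂ - t₁) (-‖γ t₂ - γ t₁‖) (f t₁ - f t₂) ≤ 0 := by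
    refine discrim_le_zero fun c => ?_
    have h1 := mul_le_mul_of_nonneg_right (le_abs_self c) (norm_nonneg (γ t₂ - γ t₁))
    linarith [key c]
  rw [discrim] at hdisc
  refine le_of_pow_le_pow_left₀ two_ne_zero (by positivity) ?_
  rw [mul_pow, mul_pow, Real.sq_sqrt (sub_nonneg.2 h12), Real.sq_sqrt hF]
  linarith
end

section
/- Let H be a real Hilbert space and T : H →L[ℝ] H a continuous self-adjoint linear operator. Let u₁ ∈ H with ‖u₁‖ = 1 and λ₁ ∈ ℝ with T u₁ = λ₁ • u₁ and λ₁ ≤ ⟨T u, u⟩ for every u ∈ H with ‖u‖ = 1. Let λ₂ ∈ ℝ be such that λ₂ ≤ ⟨T u, u⟩ for every u ∈ H with ‖u‖ = 1 and ⟨u, u₁⟩ = 0, and assume there exists u₂ ∈ H with ‖u₂‖ = 1, ⟨u₂, u₁⟩ = 0 and T u₂ = λ₂ • u₂. Then λ₂ is the least element of the set of values sup_{t ∈ [−1,1]} ⟨T(γ(t)), γ(t)⟩, where γ ranges over all maps γ : ℝ → H continuous on [−1,1] with ‖γ(t)‖ = 1 for all t ∈ [−1,1], γ(−1) = −u₁,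 and γ(1) = u₁. In particular the infimum over all such paths of the maximal quadratic-form value equals λ₂ and is attained by some path. -/
/-!
Along the great half-circle `t ↦ sin (π t / 2) • u₁ + cos (π t / 2) • u₂`, which runs from `-u₁`
through `u₂` to `u₁`, the quadratic form equals `sin² · λ₁ + cos² · λ₂`, because `u₁` and `u₂` are
orthonormal eigenvectors. As `λ₁ ≤ λ₂`, its maximum is `λ₂`, reached at `t = 0`.

Conversely, along any competing path `γ` the function `t ↦ ⟪γ t, u₁⟫` goes from `-1` to `1`, so by
the intermediate value theorem some `γ t` is orthogonal to `u₁`, and there the quadratic form is at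
least `λ₂`.
-/

open scoped RealInnerProductSpace

/-- Min-max characterization of the second eigenvalue: `λ₂` is the least possible value of
`sup_{t ∈ [-1,1]} ⟨T(γ t), γ t⟩` over continuous paths `γ` on the unit sphere joining `-u₁`
to `u₁`. -/
theorem second_eigenvalue_minmax
    {H : Type*} [NormedAddCommGroup H] [InnerProductSpace ℝ H] [CompleteSpace H]
    (T : H →L[ℝ] H) (hT : ∀ x y : H, ⟪T x, y⟫ = ⟪x, T y⟫)
    (u₁ : H) (hu₁ : ‖u₁‖ = 1) (lam₁ : ℝ) (hTu₁ : T u₁ = lam₁ • u₁)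
    (hlam₁ : ∀ u : H, ‖u‖ = 1 → lam₁ ≤ ⟪T u, u⟫)
    (lam₂ : ℝ)
    (hlam₂ : ∀ u : H, ‖u‖ = 1 → ⟪u, u₁⟫ = 0 → lam₂ ≤ ⟪T u, u⟫)
    (u₂ : H) (hu₂ : ‖u₂‖ = 1) (hu₂u₁ : ⟪u₂, u₁⟫ = 0) (hTu₂ : T u₂ = lam₂ • u₂) :
    IsLeast {r : ℝ | ∃ γ : ℝ → H,
      ContinuousOn γ (Set.Icc (-1) 1) ∧
      (∀ t ∈ Set.Icc (-1:ℝ) 1, ‖γ t‖ = 1) ∧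
      γ (-1) = -u₁ ∧ γ 1 = u₁ ∧
      r = sSup ((fun t => ⟪T (γ t), γ t⟫) '' Set.Icc (-1:ℝ) 1)} lam₂ := by
  constructor
  · have hu₁u₂ : ⟪u₁, u₂⟫ = 0 := by rw [real_inner_comm]; exact hu₂u₁
    have h11 : ⟪u₁, u₁⟫ = 1 := by rw [real_inner_self_eq_norm_sq, hu₁]; norm_num
    have h22 : ⟪u₂, u₂⟫ = 1 := by rw [real_inner_self_eq_norm_sq, hu₂]; norm_num
    have hle : lam₁ ≤ lam₂ := by
      have h := hlam₁ u₂ hu₂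
      rwa [hTu₂, real_inner_smul_left, h22, mul_one] at h
    have hval : ∀ a b : ℝ,
        ⟪T (a • u₁ + b • u₂), a • u₁ + b • u₂⟫ = a ^ 2 * lam₁ + b ^ 2 * lam₂ := by
      intro a b
      simp only [map_add, map_smul, hTu₁, hTu₂, inner_add_left, inner_add_right,
        real_inner_smul_left, real_inner_smul_right, h11, h22, hu₁u₂, hu₂u₁]
      ring
    have hnorm : ∀ a b : ℝ, a ^ 2 + b ^ 2 = 1 → ‖a • u₁ + b • u₂‖ = 1 := by
      intro a b hab
      have h : ‖a • u₁ + b • u₂‖ ^ 2 = 1 := by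
        rw [← real_inner_self_eq_norm_sq]
        simp only [inner_add_left, inner_add_right,
          real_inner_smul_left, real_inner_smul_right, h11, h22, hu₁u₂, hu₂u₁]
        linarith
      exact (pow_eq_one_iff_of_nonneg (norm_nonneg _) two_ne_zero).1 h
    refine ⟨fun t => Real.sin (Real.pi / 2 * t) • u₁ + Real.cos (Real.pi / 2 * t) • u₂,
      by fun_prop, fun t _ => hnorm _ _ (Real.sin_sq_add_cos_sq _), by simp, by simp, ?_⟩
    refine Eq.symm (IsGreatest.csSup_eq (And.intro ⟨0, by norm_num, ?_⟩ ?_))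
    · simp only [hval]
      simp
    · rintro _ ⟨t, -, rfl⟩
      simp only [hval]
      rw [Real.cos_sq']
      nlinarith [mul_le_mul_of_nonneg_left hle (sq_nonneg (Real.sin (Real.pi / 2 * t)))]
  · rintro r ⟨γ, hγ, hγn, hγ0, hγ1, rfl⟩
    have hcont : ContinuousOn (fun t => ⟪γ t, u₁⟫) (Set.Icc (-1 : ℝ) 1) :=
      hγ.inner continuousOn_const
    obtain ⟨t, ht, ht0⟩ : (0 : ℝ) ∈ (fun t => ⟪γ t, u₁⟫) '' Set.Icc (-1 : ℝ) 1 := by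
      refine intermediate_value_Icc (by norm_num) hcont ?_
      simp [hγ0, hγ1, inner_neg_left, hu₁]
    -- The supremum is a genuine one: a continuous function on a compact interval is bounded.
    have hbdd : BddAbove ((fun t => ⟪T (γ t), γ t⟫) '' Set.Icc (-1 : ℝ) 1) :=
      isCompact_Icc.bddAbove_image ((T.continuous.comp_continuousOn hγ).inner hγ)
    exact (hlam₂ _ (hγn t ht) ht0).trans (le_csSup hbdd ⟨t, ht, rfl⟩)
end

section
/- Let X be a real Banach space, T > 0, and let γ : ℝ → X and f : ℝ → ℝ be continuously differentiable on the half-open interval [0, T) (differentiable at every point of [0, T) with derivatives continuous there). Assume ‖γ'(t)‖² ≤ −4 f'(t) for every t ∈ [0, T), and that f is bounded below on [0, T). Then γ(t) converges in X as t → T from the left: there exists L ∈ X such that γ(t) → L as t ↑ T. -/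
/-!
By the arithmetic-geometric mean inequality, `‖γ'‖ ≤ 1 + ‖γ'‖² / 4 ≤ 1 - f'`, so the speed of `γ` is
at most the derivative of `g t = t - f t`. The mean value inequality then gives
`‖γ t - γ s‖ ≤ g t - g s` for `s ≤ t`. In particular `g` is nondecreasing; it is bounded above since
`T` is finite and `f` is bounded below, so it converges at `T`. Hence `g`, and with it `γ`, is Cauchy
as `t ↑ T`. This linear
form of the distance-energy estimate takes the place of the one with square roots and avoids
integration.
-/

/-- A pseudo-gradient flow trajectory with finite maximal existence time has a limit in the
complete space as `t` approaches the maximal time: if `‖γ'(t)‖² ≤ -4 f'(t)` on `[0, T)` and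
`f` is bounded below there, then `γ(t)` converges as `t ↑ T`. -/
theorem pseudo_gradient_trajectory_converges_at_maximal_time
    {X : Type*} [NormedAddCommGroup X] [NormedSpace ℝ X] [CompleteSpace X]
    (T : ℝ) (hT : 0 < T)
    (γ : ℝ → X) (f : ℝ → ℝ) (γ' : ℝ → X) (f' : ℝ → ℝ)
    (hγ : ∀ t ∈ Set.Ico (0:ℝ) T, HasDerivAt γ (γ' t) t)
    (hf : ∀ t ∈ Set.Ico (0:ℝ) T, HasDerivAt f (f' t) t)
    (hγ'c : ContinuousOn γ' (Set.Ico 0 T))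
    (hf'c : ContinuousOn f' (Set.Ico 0 T))
    (hineq : ∀ t ∈ Set.Ico (0:ℝ) T, ‖γ' t‖ ^ 2 ≤ -4 * f' t)
    (hfb : BddBelow (f '' Set.Ico 0 T)) :
    ∃ L : X, Filter.Tendsto γ (nhdsWithin T (Set.Iio T)) (nhds L) := by
  have hdist : ∀ s ∈ Set.Ico (0:ℝ) T, ∀ t ∈ Set.Ico (0:ℝ) T, s ≤ t →
      ‖γ t - γ s‖ ≤ (t - f t) - (s - f s) := by
    intro s hs t ht hst
    have hsub : ∀ x ∈ Set.Icc s t, x ∈ Set.Ico (0:ℝ) T := fun x hx =>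
      ⟨hs.1.trans hx.1, hx.2.trans_lt ht.2⟩
    have hγd : ∀ x ∈ Set.Icc s t, HasDerivAt (fun x => γ x - γ s) (γ' x) x := fun x hx =>
      (hγ x (hsub x hx)).sub_const _
    have hgd : ∀ x ∈ Set.Icc s t, HasDerivAt (fun x => (x - f x) - (s - f s)) (1 - f' x) x :=
      fun x hx => ((hasDerivAt_id' x).sub (hf x (hsub x hx))).sub_const _
    refine image_norm_le_of_norm_deriv_right_le_deriv_boundary' (f := fun x => γ x - γ s) (f' := γ')
      (B := fun x => (x - f x) - (s - f s)) (B' := fun x => 1 - f' x)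
      (fun x hx => (hγd x hx).continuousAt.continuousWithinAt)
      (fun x hx => (hγd x (Set.Ico_subset_Icc_self hx)).hasDerivWithinAt) (by simp)
      (fun x hx => (hgd x hx).continuousAt.continuousWithinAt)
      (fun x hx => (hgd x (Set.Ico_subset_Icc_self hx)).hasDerivWithinAt) ?_ ⟨hst, le_rfl⟩
    intro x hx
    have := hineq x (hsub x (Set.Ico_subset_Icc_self hx))
    -- `‖γ' x‖ ≤ 1 + ‖γ' x‖ ^ 2 / 4 ≤ 1 - f' x`
    nlinarith [sq_nonneg (‖γ' x‖ - 2)]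
  have hmono : MonotoneOn (fun t => t - f t) (Set.Ioo 0 T) := fun s hs t ht hst =>
    sub_nonneg.1 ((norm_nonneg _).trans
      (hdist s (Set.Ioo_subset_Ico_self hs) t (Set.Ioo_subset_Ico_self ht) hst))
  have hbdd : BddAbove ((fun t => t - f t) '' Set.Ioo 0 T) := by
    obtain ⟨m, hm⟩ := hfb
    refine ⟨T - m, ?_⟩
    rintro _ ⟨t, ht, rfl⟩
    have := hm ⟨t, Set.Ioo_subset_Ico_self ht, rfl⟩
    simp only
    linarith [ht.2]
  have hg := (hmono.tendsto_nhdsWithin_Ioo_left (Set.nonempty_Ioo.2 hT) hbdd).cauchy_map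
  have hmem : ∀ᶠ t in nhdsWithin T (Set.Iio T), t ∈ Set.Ico (0:ℝ) T := Ico_mem_nhdsLT hT
  refine cauchy_map_iff_exists_tendsto.1 (cauchy_map_iff.2 ⟨inferInstance, ?_⟩)
  refine tendsto_uniformity_iff_dist_tendsto_zero.2 (squeeze_zero' (.of_forall fun _ => dist_nonneg)
    ?_ (tendsto_uniformity_iff_dist_tendsto_zero.1 (cauchy_map_iff.1 hg).2))
  filter_upwards [hmem.prod_mk hmem] with p hp
  rcases le_total p.1 p.2 with h | h
  · rw [dist_comm, dist_comm (p.1 - f p.1), dist_eq_norm, Real.dist_eq]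
    exact (hdist _ hp.1 _ hp.2 h).trans (le_abs_self _)
  · rw [dist_eq_norm, Real.dist_eq]
    exact (hdist _ hp.2 _ hp.1 h).trans (le_abs_self _)
end
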